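/- arXiv:1912.06058 — 5 statements merged into one kernel-verified Lean document; each statement's English description precedes it below -/
import Mathlib

section
/- Let m ∈ ℕ and let (x¹, S¹) and (x², S²) be two pairs where x¹, x² ∈ ℝ^m and S¹, S² are finite multisets of elements of ℝ^m, with (x¹, S¹) ≠ (x², S²) (i.e., x¹ ≠ x² or the multisets S¹ and S² differ). Then there exist a continuous function φ : ℝ^m → ℝ and a continuous function ψ : ℝ^m × ℝ → ℝ such that ψ(x¹, Σ_{y∈S¹} φ(y)) ≠ ψ(x², Σ_{y∈S²} φ(y)). -/
section CompletelyRegular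

variable {X : Type*} [TopologicalSpace X]

theorem exists_continuous_eq_one_eqOn_zero [CompletelyRegularSpace X] {a : X} {K : Set X}
    (hK : IsClosed K) (ha : a ∉ K) :
    ∃ f : X → ℝ, Continuous f ∧ f a = 1 ∧ Set.EqOn f 0 K := by
  obtain ⟨g, hg, hga, hgK⟩ := CompletelyRegularSpace.completely_regular a K hK ha
  refine ⟨fun x ↦ 1 - g x, by fun_prop, by simp [hga], fun x hx ↦ ?_⟩
  simp [hgK hx]

variable [T35Space X]

/-- A function equal to `1` at `a` and to `0` at every other element of `S₁` and `S₂` sums over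
each `Sᵢ` to the multiplicity of `a`, so it suffices to pick `a` with different multiplicities. -/
theorem exists_continuous_multiset_sum_map_ne {S₁ S₂ : Multiset X} (hS : S₁ ≠ S₂) :
    ∃ φ : X → ℝ, Continuous φ ∧ (S₁.map φ).sum ≠ (S₂.map φ).sum := by
  classical
  obtain ⟨a, ha⟩ : ∃ a, S₁.count a ≠ S₂.count a := by
    simpa only [ne_eq, Multiset.ext, not_forall] using hS
  let others : Finset X := (S₁ + S₂).toFinset.erase a
  obtain ⟨φ, hφ, hφa, hφ_others⟩ := exists_continuous_eq_one_eqOn_zero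
    others.finite_toSet.isClosed (Finset.notMem_erase a _)
  have sum_eq_count {S : Multiset X} (hle : S ≤ S₁ + S₂) : (S.map φ).sum = S.count a := by
    rw [Multiset.sum_map_eq_nsmul_single a fun y hya hyS ↦ hφ_others ?_, hφa, nsmul_one]
    simpa [others, hya] using Multiset.mem_of_le hle hyS
  refine ⟨φ, hφ, ?_⟩
  rw [sum_eq_count (Multiset.le_add_right S₁ S₂), sum_eq_count (Multiset.le_add_left S₂ S₁)]
  exact_mod_cast ha

theorem stmt_8_general {x₁ x₂ : X} {S₁ S₂ : Multiset X} (h : (x₁, S₁) ≠ (x₂, S₂)) :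
    ∃ (φ : X → ℝ) (ψ : X × ℝ → ℝ), Continuous φ ∧ Continuous ψ ∧
      ψ (x₁, (S₁.map φ).sum) ≠ ψ (x₂, (S₂.map φ).sum) := by
  by_cases hx : x₁ = x₂
  · have hS : S₁ ≠ S₂ := by rintro rfl; exact h (by rw [hx])
    obtain ⟨φ, hφ, hsum⟩ := exists_continuous_multiset_sum_map_ne hS
    exact ⟨φ, Prod.snd, hφ, continuous_snd, hsum⟩
  · obtain ⟨g, hg, hgx⟩ := separatesPoints_continuous_of_t35Space hx
    exact ⟨0, g ∘ Prod.fst, continuous_zero, hg.comp continuous_fst, hgx⟩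

end CompletelyRegular

/-- Separability of the CLIP node-neighborhood aggregation: for any two distinct pairs
`(x¹, S¹) ≠ (x², S²)` of a node attribute in `ℝ^m` and a finite multiset of neighbor
attributes, there are continuous `φ : ℝ^m → ℝ` and `ψ : ℝ^m × ℝ → ℝ` with
`ψ(x¹, Σ_{y∈S¹} φ(y)) ≠ ψ(x², Σ_{y∈S²} φ(y))`. -/
theorem stmt_8 (m : ℕ) (x₁ x₂ : EuclideanSpace ℝ (Fin m))
    (S₁ S₂ : Multiset (EuclideanSpace ℝ (Fin m)))
    (h : (x₁, S₁) ≠ (x₂, S₂)) :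
    ∃ (φ : EuclideanSpace ℝ (Fin m) → ℝ) (ψ : EuclideanSpace ℝ (Fin m) × ℝ → ℝ),
      Continuous φ ∧ Continuous ψ ∧
      ψ (x₁, (S₁.map φ).sum) ≠ ψ (x₂, (S₂.map φ).sum) :=
  stmt_8_general h
end

section
/- Let m, q, N ∈ ℕ. For each n ≤ N let F_n : ℝ^m × (ℝ^m)^n → ℝ^q be a continuous function that is invariant under permutations of its second argument (F_n(x, s∘σ) = F_n(x, s) for every permutation σ of {1,…,n}), and let K_n ⊆ ℝ^m × (ℝ^m)^n be compact. Then for every ε > 0 there exist p ∈ ℕ and continuous functions φ : ℝ^m → ℝ^p and ψ : ℝ^m × ℝ^p → ℝ^q such that for every n ≤ N and every (x, s) ∈ K_n, ‖F_n(x, s) − ψ(x, Σ_{j=1}^n φ(s_j))‖ ≤ ε. -/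
/-!
Let `φ v` list the values at `v` of a basis of the polynomials of degree at most `D`. Then
`∑ j, φ (s j)` determines `∑ j, p (s j)` for every such polynomial `p`. If `D` is at least the
total number of points of two tuples, some `p` vanishes at all of these points except a prescribed
one, so equal sums force equal multiplicities, and the two tuples differ by a permutation. If
`2 ≤ D`, the sum also determines `∑ j, ‖s j‖ ^ 2`, so `s ↦ ∑ j, φ (s j)` is proper.

Hence `(x, s) ↦ (x, ∑ j, φ (s j))` is a closed map through which every family of invariant
functions factors. A closed continuous map is a quotient map onto its closed range, so the factor is
continuous there, and Tietze's theorem extends it. The resulting representation is exact, and `φ`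
depends only on the dimension and on `N`.
-/

open Finset Module MvPolynomial Topology

universe u v w

section ClosedMaps

variable {B : Type u} [TopologicalSpace B]

theorem isClosedMap_sigma_of_finite {ι : Type*} [Finite ι] {E : ι → Type*}
    [∀ i, TopologicalSpace (E i)] {f : (Σ i, E i) → B}
    (hf : ∀ i, IsClosedMap fun x ↦ f ⟨i, x⟩) : IsClosedMap f := by
  intro s hs
  have image_eq : f '' s = ⋃ i, (fun x ↦ f ⟨i, x⟩) '' (Sigma.mk i ⁻¹' s) := by
    ext b
    simp only [Set.mem_image, Set.mem_iUnion, Set.mem_preimage, Sigma.exists]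
  rw [image_eq]
  exact isClosed_iUnion_of_finite fun i ↦ hf i _ (isClosed_sigma_iff.mp hs i)

theorem exists_continuousMap_comp_eq_of_isClosedMap {A : Type*} {Y : Type v} [TopologicalSpace A]
    [NormalSpace B] [TopologicalSpace Y] [TietzeExtension.{u, v} Y] {f : A → B}
    (hf : IsClosedMap f) (hfc : Continuous f) (g : C(A, Y)) (hg : Function.FactorsThrough g f) :
    ∃ ψ : C(B, Y), ψ ∘ f = g := by
  let f' : C(A, Set.range f) := ⟨Set.rangeFactorization f, hfc.rangeFactorization⟩
  have quotient : IsQuotientMap f' :=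
    (hf.subtype_mk _).isQuotientMap f'.continuous Set.rangeFactorization_surjective
  have factors : Function.FactorsThrough g f' := fun a b h ↦ hg (congrArg Subtype.val h)
  obtain ⟨ψ, hψ⟩ := (quotient.lift g factors).exists_restrict_eq hf.isClosed_range
  refine ⟨ψ, funext fun a ↦ ?_⟩
  calc ψ (f a) = quotient.lift g factors (f' a) := DFunLike.congr_fun hψ (f' a)
    _ = g a := DFunLike.congr_fun (quotient.lift_comp g factors) a

end ClosedMaps

section Separation

variable {σ R : Type*} [CommRing R] [IsDomain R]

theorem exists_totalDegree_le_one_eval_eq_zero_eval_ne_zero {u v : σ → R} (h : u ≠ v) :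
    ∃ p : MvPolynomial σ R, p.totalDegree ≤ 1 ∧ eval u p = 0 ∧ eval v p ≠ 0 := by
  obtain ⟨k, hk⟩ := Function.ne_iff.mp h
  refine ⟨X k - C (u k), (totalDegree_sub_C_le _ _).trans (totalDegree_X k).le, by simp, ?_⟩
  simpa [sub_eq_zero] using hk.symm

theorem exists_totalDegree_le_card_forall_eval_eq_zero_eval_ne_zero {S : Finset (σ → R)}
    {v : σ → R} (hv : v ∉ S) :
    ∃ p : MvPolynomial σ R, p.totalDegree ≤ #S ∧ (∀ u ∈ S, eval u p = 0) ∧ eval v p ≠ 0 := by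
  have ne_of_mem : ∀ u ∈ S, u ≠ v := fun u hu ↦ ne_of_mem_of_not_mem hu hv
  choose! ℓ degree_le eval_self eval_ne using fun u hu ↦
    exists_totalDegree_le_one_eval_eq_zero_eval_ne_zero (ne_of_mem u hu)
  refine ⟨∏ u ∈ S, ℓ u, ?_, fun u hu ↦ ?_, ?_⟩
  · calc (∏ u ∈ S, ℓ u).totalDegree ≤ ∑ u ∈ S, (ℓ u).totalDegree := totalDegree_finsetProd _ _
      _ ≤ ∑ _u ∈ S, 1 := sum_le_sum degree_le
      _ = #S := (card_eq_sum_ones S).symm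
  · rw [eval_prod, prod_eq_zero hu (eval_self u hu)]
  · rw [eval_prod]
    exact prod_ne_zero_iff.mpr eval_ne

theorem sum_comp_eq_card_fiber_nsmul {ι α M : Type*} [Fintype ι] [DecidableEq α] [AddCommMonoid M]
    (s : ι → α) (f : α → M) (a : α) (hf : ∀ j, s j ≠ a → f (s j) = 0) :
    ∑ j, f (s j) = Fintype.card {j // s j = a} • f a := by
  rw [Fintype.card_subtype, ← sum_const, sum_filter]
  refine sum_congr rfl fun j _ ↦ ?_
  split_ifs with hj
  · rw [hj]
  · exact hf j hj

theorem exists_equiv_comp_eq_of_sum_eval_eq [CharZero R] {ι κ : Type*} [Fintype ι] [Fintype κ]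
    (s : ι → σ → R) (t : κ → σ → R)
    (h : ∀ p : MvPolynomial σ R, p.totalDegree ≤ Fintype.card ι + Fintype.card κ →
      ∑ j, eval (s j) p = ∑ j, eval (t j) p) :
    ∃ e : ι ≃ κ, t ∘ e = s := by
  classical
  have card_fiber_eq (v : σ → R) :
      Fintype.card {j // s j = v} = Fintype.card {j // t j = v} := by
    let S : Finset (σ → R) := (univ.image s ∪ univ.image t).erase v
    have card_le : #S ≤ Fintype.card ι + Fintype.card κ :=
      card_erase_le.trans ((card_union_le _ _).trans (add_le_add card_image_le card_image_le))
    obtain ⟨p, degree_le, eval_eq_zero, eval_ne_zero⟩ :=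
      exists_totalDegree_le_card_forall_eval_eq_zero_eval_ne_zero (notMem_erase v _ : v ∉ S)
    have sum_eq := h p (degree_le.trans card_le)
    rw [sum_comp_eq_card_fiber_nsmul s (eval · p) v fun j hj ↦ eval_eq_zero _ (by simp [hj]),
      sum_comp_eq_card_fiber_nsmul t (eval · p) v fun j hj ↦ eval_eq_zero _ (by simp [hj])]
      at sum_eq
    simpa only [nsmul_eq_mul, mul_eq_mul_right_iff, Nat.cast_inj, eval_ne_zero,
      or_false] using sum_eq
  let fiberEquiv v := Fintype.equivOfCardEq (card_fiber_eq v)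
  exact ⟨Equiv.ofFiberEquiv fiberEquiv, funext (Equiv.ofFiberEquiv_map fiberEquiv)⟩

end Separation

section MomentMap

variable {σ : Type*} [Finite σ] {D : ℕ}

variable (D) in
/-- The moment map of degree `D`: the values at `v` of a basis of the space of real polynomials of
total degree at most `D`. It plays the role of the encoder `φ`. -/
noncomputable def momentMap (v : σ → ℝ) :
    EuclideanSpace ℝ (Fin (finrank ℝ (restrictTotalDegree σ ℝ D))) :=
  WithLp.toLp 2 fun k ↦ eval v (finBasis ℝ (restrictTotalDegree σ ℝ D) k).1

theorem continuous_momentMap : Continuous (momentMap D : (σ → ℝ) → _) :=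
  (PiLp.continuous_toLp 2 _).comp (continuous_pi fun _ ↦ MvPolynomial.continuous_eval _)

theorem exists_continuousLinearMap_momentMap_eq_eval {p : MvPolynomial σ ℝ}
    (hp : p.totalDegree ≤ D) :
    ∃ L : EuclideanSpace ℝ (Fin (finrank ℝ (restrictTotalDegree σ ℝ D))) →L[ℝ] ℝ,
      ∀ v, L (momentMap D v) = eval v p := by
  let b := finBasis ℝ (restrictTotalDegree σ ℝ D)
  let p' : restrictTotalDegree σ ℝ D := ⟨p, (mem_restrictTotalDegree σ D p).mpr hp⟩
  refine ⟨∑ k, b.repr p' k • EuclideanSpace.proj k, fun v ↦ ?_⟩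
  have expansion : p = ∑ k, b.repr p' k • (b k).1 := by
    calc p = (∑ k, b.repr p' k • b k : restrictTotalDegree σ ℝ D) := by rw [b.sum_repr]
      _ = ∑ k, b.repr p' k • (b k).1 := by push_cast; rfl
  conv_rhs => rw [expansion]
  simp [momentMap, b, smul_eval]

theorem exists_equiv_comp_eq_of_sum_momentMap_eq {ι κ : Type*} [Fintype ι] [Fintype κ]
    (hD : Fintype.card ι + Fintype.card κ ≤ D) {s : ι → σ → ℝ} {t : κ → σ → ℝ}
    (h : ∑ j, momentMap D (s j) = ∑ j, momentMap D (t j)) :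
    ∃ e : ι ≃ κ, t ∘ e = s := by
  refine exists_equiv_comp_eq_of_sum_eval_eq s t fun p hp ↦ ?_
  obtain ⟨L, hL⟩ := exists_continuousLinearMap_momentMap_eq_eval (hp.trans hD)
  simpa only [map_sum, hL] using congrArg L h

theorem isProperMap_sum_sum_sq {ι κ : Type*} [Fintype ι] [Fintype κ] :
    IsProperMap fun s : ι → κ → ℝ ↦ ∑ j, ∑ k, s j k ^ 2 := by
  have cont : Continuous fun s : ι → κ → ℝ ↦ ∑ j, ∑ k, s j k ^ 2 := by fun_prop
  refine isProperMap_iff_isCompact_preimage.mpr ⟨cont, fun K hK ↦ ?_⟩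
  obtain ⟨C, hC⟩ := hK.bddAbove
  refine (isCompact_closedBall 0 √C).of_isClosed_subset (hK.isClosed.preimage cont) fun s hs ↦ ?_
  rw [mem_closedBall_zero_iff, pi_norm_le_iff_of_nonneg (Real.sqrt_nonneg C)]
  refine fun j ↦ (pi_norm_le_iff_of_nonneg (Real.sqrt_nonneg C)).mpr fun k ↦ Real.abs_le_sqrt ?_
  calc s j k ^ 2 ≤ ∑ k, s j k ^ 2 :=
        single_le_sum (f := fun k ↦ s j k ^ 2) (fun _ _ ↦ sq_nonneg _) (mem_univ k)
    _ ≤ ∑ j, ∑ k, s j k ^ 2 :=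
        single_le_sum (f := fun j ↦ ∑ k, s j k ^ 2)
          (fun _ _ ↦ sum_nonneg fun _ _ ↦ sq_nonneg _) (mem_univ j)
    _ ≤ C := hC hs

theorem isProperMap_sum_momentMap {ι : Type*} [Fintype ι] (hD : 2 ≤ D) :
    IsProperMap fun s : ι → σ → ℝ ↦ ∑ j, momentMap D (s j) := by
  have := Fintype.ofFinite σ
  have degree_le : (∑ k : σ, X k ^ 2 : MvPolynomial σ ℝ).totalDegree ≤ D :=
    totalDegree_finsetSum_le fun k _ ↦ (totalDegree_X_pow k 2).trans_le hD
  obtain ⟨L, hL⟩ := exists_continuousLinearMap_momentMap_eq_eval degree_le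
  have cont : Continuous fun s : ι → σ → ℝ ↦ ∑ j, momentMap D (s j) :=
    continuous_finsetSum _ fun j _ ↦ continuous_momentMap.comp (continuous_apply j)
  refine isProperMap_of_comp_of_t2 cont L.continuous ?_
  convert isProperMap_sum_sum_sq (ι := ι) (κ := σ) using 2 with s
  simp [hL]

end MomentMap

theorem exists_continuous_comp_sum_eq {X : Type u} {V : Type*} {W : Type v} {Y : Type w}
    [TopologicalSpace X] [TopologicalSpace V] [TopologicalSpace W] [AddCommMonoid W]
    [NormalSpace (X × W)] [TopologicalSpace Y] [TietzeExtension.{max u v, w} Y] {N : ℕ} {φ : V → W}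
    (proper : ∀ n ≤ N, IsProperMap fun s : Fin n → V ↦ ∑ j, φ (s j))
    (separates : ∀ n ≤ N, ∀ n' ≤ N, ∀ (s : Fin n → V) (t : Fin n' → V),
      ∑ j, φ (s j) = ∑ j, φ (t j) → ∃ e : Fin n ≃ Fin n', t ∘ e = s)
    {F : (n : ℕ) → X × (Fin n → V) → Y} (hFcont : ∀ n ≤ N, Continuous (F n))
    (hFinv : ∀ n ≤ N, ∀ x (s : Fin n → V) (σ : Equiv.Perm (Fin n)), F n (x, s ∘ σ) = F n (x, s)) :
    ∃ ψ : X × W → Y, Continuous ψ ∧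
      ∀ n ≤ N, ∀ (x : X) (s : Fin n → V), ψ (x, ∑ j, φ (s j)) = F n (x, s) := by
  let Φ : (Σ n : Set.Iic N, X × (Fin n → V)) → X × W := fun a ↦ (a.2.1, ∑ j, φ (a.2.2 j))
  have Φ_proper (n : Set.Iic N) : IsProperMap fun xs : X × (Fin n → V) ↦ Φ ⟨n, xs⟩ :=
    isProperMap_id.prodMap (proper n n.2)
  let G : C(Σ n : Set.Iic N, X × (Fin n → V), Y) :=
    ⟨fun a ↦ F a.1 a.2, continuous_sigma fun n ↦ hFcont n n.2⟩
  have factors : Function.FactorsThrough G Φ := by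
    rintro ⟨⟨n, hn⟩, x, s⟩ ⟨⟨n', hn'⟩, y, t⟩ h
    obtain ⟨rfl, sum_eq⟩ : x = y ∧ ∑ j, φ (s j) = ∑ j, φ (t j) := Prod.mk.inj h
    obtain ⟨e, rfl⟩ := separates n hn n' hn' s t sum_eq
    obtain rfl : n = n' := Fin.equiv_iff_eq.mp ⟨e⟩
    exact hFinv n hn x t e
  have Φ_closed : IsClosedMap Φ := isClosedMap_sigma_of_finite fun n ↦ (Φ_proper n).isClosedMap
  have Φ_continuous : Continuous Φ := continuous_sigma fun n ↦ (Φ_proper n).continuous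
  obtain ⟨ψ, hψ⟩ := exists_continuousMap_comp_eq_of_isClosedMap Φ_closed Φ_continuous G factors
  exact ⟨ψ, ψ.continuous, fun n hn x s ↦ congrFun hψ ⟨⟨n, hn⟩, x, s⟩⟩

theorem stmt_9_general {X : Type u} {V : Type*} {Y : Type v} [TopologicalSpace X]
    [TopologicalSpace.PseudoMetrizableSpace X] [NormedAddCommGroup V] [NormedSpace ℝ V]
    [FiniteDimensional ℝ V] [TopologicalSpace Y] [TietzeExtension.{u, v} Y] (N : ℕ) :
    ∃ (p : ℕ) (φ : V → EuclideanSpace ℝ (Fin p)), Continuous φ ∧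
      ∀ F : (n : ℕ) → X × (Fin n → V) → Y, (∀ n ≤ N, Continuous (F n)) →
        (∀ n ≤ N, ∀ (x : X) (s : Fin n → V) (σ : Equiv.Perm (Fin n)),
          F n (x, s ∘ σ) = F n (x, s)) →
        ∃ ψ : X × EuclideanSpace ℝ (Fin p) → Y, Continuous ψ ∧
          ∀ n ≤ N, ∀ (x : X) (s : Fin n → V), ψ (x, ∑ j, φ (s j)) = F n (x, s) := by
  let c : V ≃L[ℝ] (Fin (finrank ℝ V) → ℝ) := ContinuousLinearEquiv.ofFinrankEq (by simp)
  -- Separation needs degree `2 * N`, properness degree `2`.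
  let D := 2 * N + 2
  refine ⟨_, momentMap D ∘ c, continuous_momentMap.comp c.continuous, fun F hFcont hFinv ↦
    exists_continuous_comp_sum_eq (fun n _ ↦ ?_) (fun n hn n' hn' s t h ↦ ?_) hFcont hFinv⟩
  · exact (isProperMap_sum_momentMap (by omega)).comp
      (Homeomorph.piCongrRight fun _ : Fin n ↦ c.toHomeomorph).isProperMap
  · have card_le : Fintype.card (Fin n) + Fintype.card (Fin n') ≤ D := by
      simp only [Fintype.card_fin]
      omega
    obtain ⟨e, he⟩ := exists_equiv_comp_eq_of_sum_momentMap_eq card_le h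
    exact ⟨e, funext fun j ↦ c.injective (congrFun he j)⟩

/-- Universality of the CLIP permutation-invariant node aggregation scheme: continuous
permutation-invariant functions `F n` of a node attribute and an `n`-tuple of neighbor
attributes (for all sizes `n ≤ N`) can be uniformly approximated on compacts by a single
pair of continuous maps `(φ, ψ)` through `(x, s) ↦ ψ(x, Σ_j φ(s_j))`. -/
theorem stmt_9 (m q N : ℕ)
    (F : (n : ℕ) → EuclideanSpace ℝ (Fin m) × (Fin n → EuclideanSpace ℝ (Fin m)) →
      EuclideanSpace ℝ (Fin q))
    (hFcont : ∀ n ≤ N, Continuous (F n))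
    (hFinv : ∀ n ≤ N, ∀ (x : EuclideanSpace ℝ (Fin m))
      (s : Fin n → EuclideanSpace ℝ (Fin m)) (σ : Equiv.Perm (Fin n)),
      F n (x, s ∘ σ) = F n (x, s))
    (K : (n : ℕ) → Set (EuclideanSpace ℝ (Fin m) × (Fin n → EuclideanSpace ℝ (Fin m))))
    (hK : ∀ n ≤ N, IsCompact (K n)) :
    ∀ (ε : ℝ), 0 < ε →
      ∃ (p : ℕ) (φ : EuclideanSpace ℝ (Fin m) → EuclideanSpace ℝ (Fin p))
        (ψ : EuclideanSpace ℝ (Fin m) × EuclideanSpace ℝ (Fin p) → EuclideanSpace ℝ (Fin q)),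
        Continuous φ ∧ Continuous ψ ∧
        ∀ n ≤ N, ∀ xs ∈ K n, ‖F n xs - ψ (xs.1, ∑ j : Fin n, φ (xs.2 j))‖ ≤ ε := by
  obtain ⟨p, φ, hφ, factor⟩ :=
    stmt_9_general (X := EuclideanSpace ℝ (Fin m)) (V := EuclideanSpace ℝ (Fin m))
      (Y := EuclideanSpace ℝ (Fin q)) N
  obtain ⟨ψ, hψ, hF⟩ := factor F hFcont hFinv
  exact fun ε hε ↦ ⟨p, φ, ψ, hφ, hψ, fun n hn xs _ ↦ by simp [hF n hn, hε.le]⟩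
end

section
/- Let n, m ∈ ℕ, let v, w : {1,…,n} → ℝ^m be injective maps (pairwise distinct node attributes), and let A, B be symmetric irreflexive relations on {1,…,n} (adjacency relations of simple graphs). Say that an index j ∈ {1,…,n} matches if there exists i ∈ {1,…,n} with w(j) = v(i) and, for every k ≠ i, A(i,k) holds if and only if v(k) belongs to the set { w(l) : B(j,l) } of attributes of the B-neighbors of j. Then every j ∈ {1,…,n} matches if and only if the two attributed graphs are isomorphic, i.e., there exists a permutation σ of {1,…,n} such that w(j) = v(σ(j)) for all j and B(j,l) ⟺ A(σ(j), σ(l)) for all j, l. -/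
/-!
Since `w` is injective, a node of `(v, A)` can be matched by at most one node of `(w, B)`. On a
finite node set, matching every node is therefore the same as matching along a permutation `σ`.
Once `w = v ∘ σ`, membership of `v (σ l)` in `w '' {l | B j l}` means `B j l`, so matching along
`σ` says that `σ` carries `B` to `A` off the diagonal; on the diagonal both relations are false.
-/

theorem forall_exists_iff_exists_perm_of_leftUnique {ι : Type*} [Finite ι] {R : ι → ι → Prop}
    (hR : Relator.LeftUnique R) :
    (∀ j, ∃ i, R j i) ↔ ∃ σ : Equiv.Perm ι, ∀ j, R j (σ j) := by
  refine ⟨fun h => ?_, fun ⟨σ, hσ⟩ j => ⟨σ j, hσ j⟩⟩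
  choose f hf using h
  have f_injective : Function.Injective f := fun a b hab => hR (hf a) (hab ▸ hf b)
  exact ⟨Equiv.ofBijective f (Finite.injective_iff_bijective.mp f_injective), hf⟩

theorem forall_ne_iff_forall_of_self {α : Type*} {p : α → Prop} {a : α} (ha : p a) :
    (∀ b ≠ a, p b) ↔ ∀ b, p b := by
  refine ⟨fun h b => ?_, fun h b _ => h b⟩
  obtain rfl | hne := eq_or_ne b a
  · exact ha
  · exact h b hne

/-- The matching criterion of neighborhood counting for attributed graphs `(v, A)` and `(w, B)`:
node `j` of the second has the same attribute as node `i` of the first, and the neighbors of `i`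
are recognized by their attributes as those of `j`. Nodes are compared only through attributes,
and the node `i` itself is not tested. -/
def NeighborhoodMatch {ι κ α : Type*} (v : ι → α) (A : ι → ι → Prop) (w : κ → α)
    (B : κ → κ → Prop) (j : κ) (i : ι) : Prop :=
  w j = v i ∧ ∀ k ≠ i, (A i k ↔ v k ∈ w '' {l | B j l})

namespace NeighborhoodMatch

variable {ι κ α : Type*} {v : ι → α} {w : κ → α}

theorem leftUnique (hw : Function.Injective w) (A : ι → ι → Prop) (B : κ → κ → Prop) :
    Relator.LeftUnique (NeighborhoodMatch v A w B) :=
  fun _ _ _ ha hb => hw (ha.1.trans hb.1.symm)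

theorem apply_equiv_iff (hw : Function.Injective w) (A : ι → ι → Prop) (B : κ → κ → Prop)
    {σ : κ ≃ ι} (hσ : ∀ j, w j = v (σ j)) (j : κ) :
    NeighborhoodMatch v A w B j (σ j) ↔ ∀ l ≠ j, (B j l ↔ A (σ j) (σ l)) := by
  have mem_neighbors_iff (l : κ) : v (σ l) ∈ w '' {l | B j l} ↔ B j l := by
    rw [← hσ l]
    exact hw.mem_set_image
  calc NeighborhoodMatch v A w B j (σ j)
      ↔ ∀ k ≠ σ j, (A (σ j) k ↔ v k ∈ w '' {l | B j l}) := and_iff_right (hσ j)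
    _ ↔ ∀ l, σ l ≠ σ j → (A (σ j) (σ l) ↔ v (σ l) ∈ w '' {l | B j l}) :=
      σ.forall_congr_right.symm
    _ ↔ ∀ l ≠ j, (B j l ↔ A (σ j) (σ l)) := by
      simp only [σ.injective.ne_iff, mem_neighbors_iff, iff_comm]

theorem forall_apply_equiv_iff (hw : Function.Injective w) {A : ι → ι → Prop}
    {B : κ → κ → Prop} (hA : ∀ i, ¬ A i i) (hB : ∀ j, ¬ B j j) (σ : κ ≃ ι) :
    (∀ j, NeighborhoodMatch v A w B j (σ j)) ↔
      (∀ j, w j = v (σ j)) ∧ ∀ j l, B j l ↔ A (σ j) (σ l) := by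
  have match_iff (hσ : ∀ j, w j = v (σ j)) (j : κ) :
      NeighborhoodMatch v A w B j (σ j) ↔ ∀ l, B j l ↔ A (σ j) (σ l) :=
    (apply_equiv_iff hw A B hσ j).trans <|
      forall_ne_iff_forall_of_self (iff_of_false (hB j) (hA (σ j)))
  constructor
  · intro h
    have hσ : ∀ j, w j = v (σ j) := fun j => (h j).1
    exact ⟨hσ, fun j => (match_iff hσ j).mp (h j)⟩
  · rintro ⟨hσ, hBA⟩ j
    exact (match_iff hσ j).mpr (hBA j)

end NeighborhoodMatch

theorem stmt_12_general {ι α : Type*} [Finite ι] {v w : ι → α} (hw : Function.Injective w)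
    {A B : ι → ι → Prop} (hA : ∀ i, ¬ A i i) (hB : ∀ j, ¬ B j j) :
    (∀ j, ∃ i, NeighborhoodMatch v A w B j i) ↔
      ∃ σ : Equiv.Perm ι, (∀ j, w j = v (σ j)) ∧ ∀ j l, B j l ↔ A (σ j) (σ l) :=
  (forall_exists_iff_exists_perm_of_leftUnique (NeighborhoodMatch.leftUnique hw A B)).trans
    (exists_congr (NeighborhoodMatch.forall_apply_equiv_iff hw hA hB))

/-- For attributed graphs `(v, A)` and `(w, B)` on `n` nodes with pairwise distinct node
attributes (injective `v`, `w`) and symmetric irreflexive adjacency relations: every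
node `j` "matches" (there is `i` with `w j = v i` whose `A`-neighborhood matches the set
of attributes of the `B`-neighbors of `j`) if and only if the graphs are isomorphic. -/
theorem stmt_12 (n m : ℕ) (v w : Fin n → EuclideanSpace ℝ (Fin m))
    (hv : Function.Injective v) (hw : Function.Injective w)
    (A B : Fin n → Fin n → Prop)
    (hAsymm : ∀ i k, A i k → A k i) (hAirr : ∀ i, ¬ A i i)
    (hBsymm : ∀ j l, B j l → B l j) (hBirr : ∀ j, ¬ B j j) :
    (∀ j : Fin n, ∃ i : Fin n, w j = v i ∧
        ∀ k : Fin n, k ≠ i → (A i k ↔ v k ∈ w '' {l | B j l})) ↔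
      ∃ σ : Equiv.Perm (Fin n),
        (∀ j, w j = v (σ j)) ∧ ∀ j l, B j l ↔ A (σ j) (σ l) :=
  stmt_12_general hw hAirr hBirr
end

section
/- Let n, m ∈ ℕ, let v, w : {1,…,n} → ℝ^m be injective maps, and let A, B be symmetric irreflexive relations on {1,…,n}. Suppose the attributed graphs (v, A) and (w, B) are NOT isomorphic (no permutation σ of {1,…,n} satisfies w = v∘σ and B(j,l) ⟺ A(σ(j),σ(l)) for all j,l). Then the number of indices j ∈ {1,…,n} such that there exists i with w(j) = v(i) and, for every k ≠ i, A(i,k) ⟺ v(k) ∈ { w(l) : B(j,l) }, is at most n − 1. -/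
/-!
If every node of `(w, B)` matches some node of `(v, A)`, then choosing matches gives a map `σ` with
`w = v ∘ σ`. It is injective because `w` is, hence bijective by counting. A neighborhood is known
only through its set of attributes, but injectivity of `w` recovers the neighbors from it, so `σ` is
an isomorphism. Hence a pair that is not isomorphic has an unmatched node.
-/

section

variable {V W X : Type*} {v : V → X} {w : W → X} {A : V → V → Prop} {B : W → W → Prop}

/-- The node `j` of the attributed graph `(w, B)` matches the node `i` of `(v, A)`: the two nodes
have the same attribute, and the nodes `k ≠ i` adjacent to `i` are those whose attribute occurs
among the neighbors of `j`. Loops are not compared. -/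
def NodeMatches (v : V → X) (w : W → X) (A : V → V → Prop) (B : W → W → Prop)
    (i : V) (j : W) : Prop :=
  w j = v i ∧ ∀ k, k ≠ i → (A i k ↔ v k ∈ w '' {l | B j l})

theorem NodeMatches.rel_iff_rel {i k : V} {j l : W} (hij : NodeMatches v w A B i j)
    (hw : Function.Injective w) (hlk : w l = v k) (hlj : l ≠ j) : A i k ↔ B j l := by
  have hki : k ≠ i := by
    rintro rfl
    exact hlj (hw (hlk.trans hij.1.symm))
  rw [hij.2 k hki, ← hlk, hw.mem_set_image, Set.mem_ofPred_eq]

theorem exists_relIso_of_forall_exists_nodeMatches [Finite V] (hcard : Nat.card V ≤ Nat.card W)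
    (hw : Function.Injective w) (hloop : ∀ i j, w j = v i → (A i i ↔ B j j))
    (hmatch : ∀ j, ∃ i, NodeMatches v w A B i j) :
    ∃ σ : B ≃r A, ∀ j, w j = v (σ j) := by
  choose f hf using hmatch
  have hwf : w = v ∘ f := funext fun j => (hf j).1
  have f_injective : Function.Injective f := .of_comp (hwf ▸ hw)
  have f_bijective : Function.Bijective f := f_injective.bijective_of_nat_card_le hcard
  have f_rel (j l : W) : A (f j) (f l) ↔ B j l := by
    rcases eq_or_ne l j with rfl | hlj
    · exact hloop (f l) l (hf l).1
    · exact (hf j).rel_iff_rel hw (hf l).1 hlj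
  exact ⟨⟨Equiv.ofBijective f f_bijective, f_rel _ _⟩, congrFun hwf⟩

theorem stmt_13_general [Finite V] [Finite W] (hcard : Nat.card V ≤ Nat.card W)
    (hw : Function.Injective w) (hloop : ∀ i j, w j = v i → (A i i ↔ B j j))
    (hniso : ¬ ∃ σ : B ≃r A, ∀ j, w j = v (σ j)) :
    {j | ∃ i, NodeMatches v w A B i j}.ncard < Nat.card W :=
  Set.ncard_lt_card fun hall => hniso <|
    exists_relIso_of_forall_exists_nodeMatches hcard hw hloop (Set.eq_univ_iff_forall.mp hall)

end

/-- If two attributed graphs `(v, A)` and `(w, B)` on `n` nodes with pairwise distinct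
node attributes and symmetric irreflexive adjacency relations are NOT isomorphic, then
the number of "matching" nodes `j` (those admitting `i` with `w j = v i` whose
`A`-neighborhood matches the attributes of the `B`-neighbors of `j`) is at most `n − 1`. -/
theorem stmt_13 (n m : ℕ) (v w : Fin n → EuclideanSpace ℝ (Fin m))
    (hv : Function.Injective v) (hw : Function.Injective w)
    (A B : Fin n → Fin n → Prop)
    (hAsymm : ∀ i k, A i k → A k i) (hAirr : ∀ i, ¬ A i i)
    (hBsymm : ∀ j l, B j l → B l j) (hBirr : ∀ j, ¬ B j j)
    (hniso : ¬ ∃ σ : Equiv.Perm (Fin n),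
      (∀ j, w j = v (σ j)) ∧ ∀ j l, B j l ↔ A (σ j) (σ l)) :
    {j : Fin n | ∃ i : Fin n, w j = v i ∧
        ∀ k : Fin n, k ≠ i → (A i k ↔ v k ∈ w '' {l | B j l})}.ncard ≤ n - 1 :=
  Nat.le_sub_one_of_lt <| (stmt_13_general le_rfl hw
    (fun i j _ => iff_of_false (hAirr i) (hBirr j))
    fun ⟨σ, hσ⟩ => hniso ⟨σ.toEquiv, hσ, fun _ _ => σ.map_rel_iff.symm⟩).trans_eq (Nat.card_fin n)
end

section
/- Fix d, q ∈ ℕ, v₀ ∈ ℝ^d, T ∈ ℕ, update functions f_t : ℝ^d × Multiset(ℝ^d) → ℝ^d for t = 0,…,T−1, and a readout function R : Multiset(ℝ^d) → ℝ^q. Let G¹ and G² be any two k-regular graphs on n nodes (symmetric irreflexive adjacency, every node with exactly k neighbors), with all node attributes equal to v₀. Run the MPNN on each graph: x_{i,0} = v₀ and x_{i,t+1} = f_t(x_{i,t}, {x_{j,t} : j neighbor of i}), and output R applied to the multiset of the n final representations {x_{i,T}}. Then the outputs on G¹ and G² are equal. In particular, MPNNs cannot separate non-isomorphic k-regular graphs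 of the same size with identical node attributes, and hence MPNNs are not a universal representation of the space of graphs with node attributes. -/
/-!
While all nodes of a `k`-regular graph carry one representation `c`, each node receives the
same input `(c, {c, …, c})`, with `k` copies of `c`, so the update again gives all nodes one
representation. The representations thus follow a recursion that sees only `k` and not the
adjacency, and the readout sees only the number of nodes.
-/

section RegularRun

variable {V X : Type*} [Fintype V]

/-- `x t i` is the representation of node `i` after `t` steps of the message passing neural
network with updates `f`, on the graph `A` with all node attributes equal to `v₀`. Only the
first `T` updates are prescribed. The adjacency is an arbitrary relation, and the neighbors
of `i` are the `j` with `A i j`. -/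
structure IsMPNNRun (A : V → V → Prop) [DecidableRel A] (f : ℕ → X × Multiset X → X) (v₀ : X)
    (T : ℕ) (x : ℕ → V → X) : Prop where
  init : ∀ i, x 0 i = v₀
  update : ∀ t < T, ∀ i,
    x (t + 1) i = f t (x t i, ((Finset.univ.filter fun j => A i j).val).map (x t))

/-- The common representation, after `t` steps, of the nodes of any `k`-regular graph with all
node attributes equal to `v₀`. It is defined without reference to a graph. -/
def regularState (f : ℕ → X × Multiset X → X) (v₀ : X) (k : ℕ) : ℕ → X
  | 0 => v₀
  | t + 1 => f t (regularState f v₀ k t, Multiset.replicate k (regularState f v₀ k t))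

variable {A : V → V → Prop} [DecidableRel A] {f : ℕ → X × Multiset X → X} {v₀ : X} {k T : ℕ}
  {x : ℕ → V → X}

theorem IsMPNNRun.eq_const_regularState (hx : IsMPNNRun A f v₀ T x)
    (hreg : ∀ i, (Finset.univ.filter fun j => A i j).card = k) {t : ℕ} (ht : t ≤ T) :
    x t = fun _ => regularState f v₀ k t := by
  induction t with
  | zero => exact funext hx.init
  | succ t ih =>
    funext i
    rw [hx.update t ht i, ih (Nat.le_of_succ_le ht), Multiset.map_const', Finset.card_val,
      hreg i, regularState]

theorem IsMPNNRun.map_final_eq_replicate (hx : IsMPNNRun A f v₀ T x)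
    (hreg : ∀ i, (Finset.univ.filter fun j => A i j).card = k) :
    Finset.univ.val.map (x T) =
      Multiset.replicate (Fintype.card V) (regularState f v₀ k T) := by
  rw [hx.eq_const_regularState hreg le_rfl, Multiset.map_const', Finset.card_val,
    Finset.card_univ]

end RegularRun

theorem stmt_15_general {V₁ V₂ X : Type*} [Fintype V₁] [Fintype V₂]
    (hcard : Fintype.card V₁ = Fintype.card V₂) {k T : ℕ} {v₀ : X}
    {f : ℕ → X × Multiset X → X}
    {A₁ : V₁ → V₁ → Prop} {A₂ : V₂ → V₂ → Prop} [DecidableRel A₁] [DecidableRel A₂]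
    (h₁reg : ∀ i, (Finset.univ.filter fun j => A₁ i j).card = k)
    (h₂reg : ∀ i, (Finset.univ.filter fun j => A₂ i j).card = k)
    {x₁ : ℕ → V₁ → X} {x₂ : ℕ → V₂ → X}
    (hx₁ : IsMPNNRun A₁ f v₀ T x₁) (hx₂ : IsMPNNRun A₂ f v₀ T x₂) :
    Finset.univ.val.map (x₁ T) = Finset.univ.val.map (x₂ T) := by
  rw [hx₁.map_final_eq_replicate h₁reg, hx₂.map_final_eq_replicate h₂reg, hcard]

/-- An MPNN (initialization to a common attribute `v₀`, `T` message-passing updates, and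
a readout `R` of the multiset of final node representations) produces the same output on
any two `k`-regular graphs on `n` nodes: MPNNs cannot separate non-isomorphic `k`-regular
graphs of the same size with identical node attributes. -/
theorem stmt_15 (d q n k T : ℕ) (v₀ : EuclideanSpace ℝ (Fin d))
    (f : ℕ → EuclideanSpace ℝ (Fin d) × Multiset (EuclideanSpace ℝ (Fin d)) →
      EuclideanSpace ℝ (Fin d))
    (R : Multiset (EuclideanSpace ℝ (Fin d)) → EuclideanSpace ℝ (Fin q))
    (A₁ A₂ : Fin n → Fin n → Prop) [DecidableRel A₁] [DecidableRel A₂]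
    (h₁symm : ∀ i j, A₁ i j → A₁ j i) (h₁irr : ∀ i, ¬ A₁ i i)
    (h₁reg : ∀ i, (Finset.univ.filter fun j => A₁ i j).card = k)
    (h₂symm : ∀ i j, A₂ i j → A₂ j i) (h₂irr : ∀ i, ¬ A₂ i i)
    (h₂reg : ∀ i, (Finset.univ.filter fun j => A₂ i j).card = k)
    (x₁ x₂ : ℕ → Fin n → EuclideanSpace ℝ (Fin d))
    (hx₁0 : ∀ i, x₁ 0 i = v₀)
    (hx₁s : ∀ t < T, ∀ i, x₁ (t + 1) i =
      f t (x₁ t i, ((Finset.univ.filter fun j => A₁ i j).val).map (x₁ t)))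
    (hx₂0 : ∀ i, x₂ 0 i = v₀)
    (hx₂s : ∀ t < T, ∀ i, x₂ (t + 1) i =
      f t (x₂ t i, ((Finset.univ.filter fun j => A₂ i j).val).map (x₂ t))) :
    R (Finset.univ.val.map (x₁ T)) = R (Finset.univ.val.map (x₂ T)) :=
  congrArg R (stmt_15_general rfl h₁reg h₂reg ⟨hx₁0, hx₁s⟩ ⟨hx₂0, hx₂s⟩)
end
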